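/- arXiv:1908.11093 — 2 statements merged into one kernel-verified Lean document; each statement's English description precedes it below -/
import Mathlib

section
/- Let D be the unit disk, G its Dirichlet Green's function, Ω > 0, λ > 1/|D|, and define ℰ(w) = (1/2)∫_D∫_D G(x,y)w(x)w(y) dx dy + (Ω/2)∫_D |x|² w(x) dx on K_λ(D) = {w ∈ L^∞(D) : 0 ≤ w ≤ λ a.e., ∫_D w = 1}. Then ℰ is bounded above on K_λ(D) and attains its supremum: there exists w^λ ∈ K_λ(D) with ℰ(w^λ) = sup_{K_λ(D)} ℰ. -/
open MeasureTheory Real Set Filter Topology ENNReal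
noncomputable section
abbrev E2 := EuclideanSpace ℝ (Fin 2)
def diskD : Set E2 := Metric.ball 0 1
def greenh (x y : E2) : ℝ := -(1/(2*π)) * Real.log ‖y‖ - (1/(2*π)) * Real.log ‖x - (‖y‖^2)⁻¹ • y‖
def greenG (x y : E2) : ℝ := -(1/(2*π)) * Real.log ‖x - y‖ - greenh x y
def muD : Measure E2 := volume.restrict diskD
def Kset (lam : ℝ) : Set (E2 → ℝ) :=
  {w | AEMeasurable w muD ∧ (∀ᵐ x ∂muD, 0 ≤ w x ∧ w x ≤ lam) ∧ ∫ x, w x ∂muD = 1}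
def Efun (w : E2 → ℝ) : ℝ := (1/2) * ∫ x in diskD, ∫ y in diskD, greenG x y * w x * w y
def calE (Ω : ℝ) (w : E2 → ℝ) : ℝ := Efun w + (Ω/2) * ∫ x in diskD, ‖x‖^2 * w x

/-!
A closed convex set of uniformly bounded densities is bounded in `L²`, hence weakly compact there,
so it suffices that `w ↦ ∫ k(x, y) w(x) w(y) + ∫ h w` is weakly continuous on it for all integrable
`k` and `h`. Against the indicator of a rectangle the quadratic term is a product of two weakly
continuous functionals; a π-λ argument passes to measurable sets of pairs, and density of simple
functions in `L¹`, uniformly in `w` thanks to the common bound, passes to integrable kernels.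

The Green's function of the disk is `(2π)⁻¹ log (|y| |x - y*| / |x - y|)` with `y* = y / |y|²`.
Since `|y|² |x - y*|² = |x - y|² + (1 - |x|²) (1 - |y|²)`, the quotient lies between `1` and
`2 / |x - y|`, and `log t ≤ t` bounds the Green's function by the kernel `(π |x - y|)⁻¹`, which is
integrable in the plane.
-/

section WeakContinuity

variable {X γ E : Type*} [TopologicalSpace X] [MeasurableSpace γ] [NormedAddCommGroup E]
  [NormedSpace ℝ E] {ν : Measure γ} {u : X → γ → E} {C : ℝ}

lemma continuous_setIntegral_of_isPiSystem [CompleteSpace E] [IsFiniteMeasure ν] {S : Set (Set γ)}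
    (hgen : ‹MeasurableSpace γ› = MeasurableSpace.generateFrom S) (hpi : IsPiSystem S)
    (hmeas : ∀ x, AEStronglyMeasurable (u x) ν) (hbound : ∀ x, ∀ᵐ a ∂ν, ‖u x a‖ ≤ C)
    (huniv : Continuous fun x ↦ ∫ a, u x a ∂ν)
    (hcont : ∀ s ∈ S, Continuous fun x ↦ ∫ a in s, u x a ∂ν) {s : Set γ} (hs : MeasurableSet s) :
    Continuous fun x ↦ ∫ a in s, u x a ∂ν := by
  have hint (x : X) : Integrable (u x) ν := .of_bound (hmeas x) C (hbound x)
  induction s, hs using MeasurableSpace.induction_on_inter hgen hpi with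
  | empty => simpa only [setIntegral_empty] using continuous_const
  | basic s hs => exact hcont s hs
  | compl s hs ih =>
    simp only [setIntegral_compl hs (hint _)]
    exact huniv.sub ih
  | iUnion f hdisj hf ih =>
    simp only [integral_iUnion hf hdisj (hint _).integrableOn]
    refine continuous_tsum (u := fun i ↦ C * ν.real (f i)) ih ?_ fun i x ↦
      norm_setIntegral_le_of_norm_le_const_ae (measure_lt_top _ _) (ae_restrict_of_ae (hbound x))
    refine (ENNReal.summable_toReal ?_).mul_left C
    exact measure_iUnion hdisj hf ▸ measure_ne_top ν _

lemma isClosed_setOf_continuous_integral_smul (hmeas : ∀ x, AEStronglyMeasurable (u x) ν)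
    (hbound : ∀ x, ∀ᵐ a ∂ν, ‖u x a‖ ≤ C) :
    IsClosed {F : γ →₁[ν] ℝ | Continuous fun x ↦ ∫ a, F a • u x a ∂ν} := by
  refine isSeqClosed_iff_isClosed.1 fun F F₀ hF hlim ↦ ?_
  have hint (x : X) (F : γ →₁[ν] ℝ) : Integrable (fun a ↦ F a • u x a) ν :=
    (L1.integrable_coeFn F).smul_bdd C (hmeas x) (hbound x)
  have hdist (n : ℕ) (x : X) :
      dist (∫ a, F₀ a • u x a ∂ν) (∫ a, F n a • u x a ∂ν) ≤ ‖F₀ - F n‖ * C := by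
    rw [dist_eq_norm, ← integral_sub (hint x _) (hint x _), L1.norm_eq_integral_norm,
      ← integral_mul_const]
    refine norm_integral_le_of_norm_le ((L1.integrable_coeFn _).norm.mul_const C) ?_
    filter_upwards [hbound x, Lp.coeFn_sub F₀ (F n)] with a ha hsub
    rw [hsub, Pi.sub_apply, ← sub_smul, norm_smul]
    gcongr
  have hzero : Tendsto (fun n ↦ ‖F₀ - F n‖ * C) atTop (𝓝 0) := by
    simpa using ((tendsto_const_nhds (x := F₀)).sub hlim).norm.mul_const C
  have huniform : TendstoUniformly (fun n x ↦ ∫ a, F n a • u x a ∂ν)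
      (fun x ↦ ∫ a, F₀ a • u x a ∂ν) atTop :=
    Metric.tendstoUniformly_iff.2 fun ε hε ↦
      (hzero.eventually_lt_const hε).mono fun n hn x ↦ (hdist n x).trans_lt hn
  exact huniform.continuous (.of_forall hF)

theorem continuous_integral_smul_of_continuous_setIntegral
    (hmeas : ∀ x, AEStronglyMeasurable (u x) ν) (hbound : ∀ x, ∀ᵐ a ∂ν, ‖u x a‖ ≤ C)
    (hcont : ∀ s, MeasurableSet s → ν s < ∞ → Continuous fun x ↦ ∫ a in s, u x a ∂ν)
    {F : γ → ℝ} (hF : Integrable F ν) : Continuous fun x ↦ ∫ a, F a • u x a ∂ν := by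
  have hint (x : X) {F : γ → ℝ} (hF : Integrable F ν) : Integrable (fun a ↦ F a • u x a) ν :=
    hF.smul_bdd C (hmeas x) (hbound x)
  refine Integrable.induction (P := fun F ↦ Continuous fun x ↦ ∫ a, F a • u x a ∂ν)
    (fun c s hs hνs ↦ ?_) (fun f g _ hf hg hfc hgc ↦ ?_)
    (isClosed_setOf_continuous_integral_smul hmeas hbound) (fun f g hfg _ hfc ↦ ?_) hF
  · have hindicator (x : X) :
        ∫ a, s.indicator (fun _ ↦ c) a • u x a ∂ν = c • ∫ a in s, u x a ∂ν := by
      simp only [← indicator_smul_apply_left]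
      rw [integral_indicator hs, integral_smul]
    simp only [hindicator]
    exact (hcont s hs hνs).const_smul c
  · simp only [Pi.add_apply, add_smul, integral_add (hint _ hf) (hint _ hg)]
    exact hfc.add hgc
  · refine (continuous_congr fun x ↦ integral_congr_ae ?_).1 hfc
    filter_upwards [hfg] with a ha
    rw [ha]

end WeakContinuity

section ProductIntegrands

variable {X α β 𝕜 : Type*} [MeasurableSpace α] [MeasurableSpace β] [RCLike 𝕜]
  {μ : Measure α} {ν : Measure β}

lemma ae_norm_mul_prod_le {f : α → 𝕜} {g : β → 𝕜} {C D : ℝ}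
    (hf : ∀ᵐ a ∂μ, ‖f a‖ ≤ C) (hg : ∀ᵐ b ∂ν, ‖g b‖ ≤ D) :
    ∀ᵐ p ∂μ.prod ν, ‖f p.1 * g p.2‖ ≤ C * D := by
  filter_upwards [Measure.quasiMeasurePreserving_fst.ae hf,
    Measure.quasiMeasurePreserving_snd.ae hg] with p hfp hgp
  exact norm_mul_le_of_le hfp hgp

theorem continuous_integral_smul_mul_prod [TopologicalSpace X] [IsFiniteMeasure μ]
    [IsFiniteMeasure ν] {f : X → α → 𝕜} {g : X → β → 𝕜} {C D : ℝ}
    (hf_meas : ∀ x, AEStronglyMeasurable (f x) μ) (hg_meas : ∀ x, AEStronglyMeasurable (g x) ν)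
    (hf_bound : ∀ x, ∀ᵐ a ∂μ, ‖f x a‖ ≤ C) (hg_bound : ∀ x, ∀ᵐ b ∂ν, ‖g x b‖ ≤ D)
    (hf_cont : ∀ s, MeasurableSet s → Continuous fun x ↦ ∫ a in s, f x a ∂μ)
    (hg_cont : ∀ s, MeasurableSet s → Continuous fun x ↦ ∫ b in s, g x b ∂ν)
    {k : α × β → ℝ} (hk : Integrable k (μ.prod ν)) :
    Continuous fun x ↦ ∫ p, k p • (f x p.1 * g x p.2) ∂μ.prod ν := by
  have hmeas (x : X) : AEStronglyMeasurable (fun p : α × β ↦ f x p.1 * g x p.2) (μ.prod ν) :=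
    (hf_meas x).comp_fst.mul (hg_meas x).comp_snd
  have hbound (x : X) := ae_norm_mul_prod_le (hf_bound x) (hg_bound x)
  have hrect : ∀ s ∈ image2 (· ×ˢ ·) {s : Set α | MeasurableSet s} {t : Set β | MeasurableSet t},
      Continuous fun x ↦ ∫ p in s, f x p.1 * g x p.2 ∂μ.prod ν := by
    rintro _ ⟨s, hs, t, ht, rfl⟩
    simp only [setIntegral_prod_mul]
    exact (hf_cont s hs).mul (hg_cont t ht)
  have huniv : Continuous fun x ↦ ∫ p, f x p.1 * g x p.2 ∂μ.prod ν := by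
    simpa only [univ_prod_univ, setIntegral_univ] using
      hrect _ (mem_image2_of_mem MeasurableSet.univ MeasurableSet.univ)
  exact continuous_integral_smul_of_continuous_setIntegral hmeas hbound
    (fun _ hs _ ↦ continuous_setIntegral_of_isPiSystem generateFrom_prod.symm isPiSystem_prod
      hmeas hbound huniv hrect hs) hk

end ProductIntegrands

section WeakCompactness

variable {𝕜 E : Type*} [RCLike 𝕜] [NormedAddCommGroup E]

theorem isCompact_toWeakSpace_image_of_surjective [NormedSpace 𝕜 E] [NormedSpace ℝ E]
    [IsScalarTower ℝ 𝕜 E]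
    (hrefl : Function.Surjective (NormedSpace.inclusionInDoubleDualWeak 𝕜 E)) {S : Set E}
    (hconv : Convex ℝ S) (hclosed : IsClosed S) (hbdd : Bornology.IsBounded S) :
    IsCompact (toWeakSpace 𝕜 E '' S) := by
  have hcompact : IsCompact (closure (toWeakSpace 𝕜 E '' S)) :=
    NormedSpace.isCompact_closure_of_isBounded 𝕜 E _
      (by rwa [preimage_image_eq _ (toWeakSpace 𝕜 E).injective])
      (hrefl.range_eq ▸ subset_univ _)
  rwa [← hconv.toWeakSpace_closure 𝕜, hclosed.closure_eq] at hcompact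

lemma surjective_inclusionInDoubleDualWeak [InnerProductSpace 𝕜 E] [CompleteSpace E] :
    Function.Surjective (NormedSpace.inclusionInDoubleDualWeak 𝕜 E) := by
  intro φ
  let ψ : StrongDual 𝕜 E := ((starₗᵢ 𝕜 : 𝕜 ≃ₗᵢ⋆[𝕜] 𝕜) : 𝕜 →L⋆[𝕜] 𝕜).comp
    ((WeakDual.toStrongDual φ).comp ((InnerProductSpace.toDual 𝕜 E : E ≃ₗᵢ⋆[𝕜] _) : E →L⋆[𝕜] _))
  refine ⟨toWeakSpace 𝕜 E ((InnerProductSpace.toDual 𝕜 E).symm ψ), ?_⟩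
  refine ContinuousLinearMap.ext fun ℓ ↦ ?_
  obtain ⟨x, rfl⟩ := (InnerProductSpace.toDual 𝕜 E).surjective ℓ
  calc inner 𝕜 x ((InnerProductSpace.toDual 𝕜 E).symm ψ)
      = star (inner 𝕜 ((InnerProductSpace.toDual 𝕜 E).symm ψ) x) := (inner_conj_symm _ _).symm
    _ = star (ψ x) := by rw [InnerProductSpace.toDual_symm_apply]
    _ = φ (InnerProductSpace.toDual 𝕜 E x) := star_star _

lemma continuous_setIntegral_toWeakSpace_symm {α : Type*} [MeasurableSpace α] {μ : Measure α}
    {s : Set α} (hs : MeasurableSet s) (hμs : μ s ≠ ∞) :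
    Continuous fun w : WeakSpace 𝕜 (Lp 𝕜 2 μ) ↦
      ∫ x in s, (toWeakSpace 𝕜 (Lp 𝕜 2 μ)).symm w x ∂μ := by
  simp only [← L2.inner_indicatorConstLp_one (𝕜 := 𝕜) hs hμs]
  exact WeakBilin.eval_continuous (topDualPairing 𝕜 (Lp 𝕜 2 μ)).flip
    (innerSL 𝕜 (indicatorConstLp 2 hs hμs (1 : 𝕜)))

end WeakCompactness

section Energy

variable {α : Type*} [MeasurableSpace α] {μ : Measure α}

/-- The energy `∬ k w⊗w + ∫ h w` of a density `w` with pair interaction kernel `k` in an external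
potential `h`. It covers the energies `calE`, whose factors `1 / 2` and `Ω / 2` go into `k` and `h`;
the double integral is taken over the product measure, not iterated. -/
def interactionEnergy (μ : Measure α) (k : α × α → ℝ) (h : α → ℝ) (w : α → ℝ) : ℝ :=
  ∫ p, k p * (w p.1 * w p.2) ∂μ.prod μ + ∫ x, h x * w x ∂μ

lemma interactionEnergy_congr_ae {k : α × α → ℝ} {h v w : α → ℝ} (hvw : v =ᵐ[μ] w) :
    interactionEnergy μ k h v = interactionEnergy μ k h w := by
  have hprod : (fun p : α × α ↦ k p * (v p.1 * v p.2)) =ᵐ[μ.prod μ]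
      fun p ↦ k p * (w p.1 * w p.2) := by
    filter_upwards [Measure.quasiMeasurePreserving_fst.ae hvw,
      Measure.quasiMeasurePreserving_snd.ae hvw] with p h₁ h₂
    rw [h₁, h₂]
  have hlin : (fun x ↦ h x * v x) =ᵐ[μ] fun x ↦ h x * w x := hvw.mono fun x hx ↦
    congrArg (h x * ·) hx
  rw [interactionEnergy, interactionEnergy, integral_congr_ae hprod, integral_congr_ae hlin]

variable [IsFiniteMeasure μ]

theorem continuousOn_interactionEnergy_toWeakSpace_symm {S : Set (Lp ℝ 2 μ)} {C : ℝ}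
    (hbound : ∀ w ∈ S, ∀ᵐ x ∂μ, ‖w x‖ ≤ C) {k : α × α → ℝ} (hk : Integrable k (μ.prod μ))
    {h : α → ℝ} (hh : Integrable h μ) :
    ContinuousOn (fun w ↦ interactionEnergy μ k h ((toWeakSpace ℝ (Lp ℝ 2 μ)).symm w))
      (toWeakSpace ℝ (Lp ℝ 2 μ) '' S) := by
  rw [continuousOn_iff_continuous_domRestrict]
  let u (w : toWeakSpace ℝ (Lp ℝ 2 μ) '' S) : α → ℝ := (toWeakSpace ℝ (Lp ℝ 2 μ)).symm w
  have hu_meas (w) : AEStronglyMeasurable (u w) μ := Lp.aestronglyMeasurable _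
  have hu_bound : ∀ w, ∀ᵐ x ∂μ, ‖u w x‖ ≤ C := by
    rintro ⟨_, w, hw, rfl⟩
    exact hbound w hw
  have hu_cont (s : Set α) (hs : MeasurableSet s) : Continuous fun w ↦ ∫ x in s, u w x ∂μ :=
    (continuous_setIntegral_toWeakSpace_symm hs (measure_ne_top μ s)).comp continuous_subtype_val
  exact (continuous_integral_smul_mul_prod hu_meas hu_meas hu_bound hu_bound hu_cont hu_cont
    hk).add (continuous_integral_smul_of_continuous_setIntegral hu_meas hu_bound
      (fun s hs _ ↦ hu_cont s hs) hh)

lemma isBounded_of_ae_norm_le {E : Type*} [NormedAddCommGroup E] {q : ℝ≥0∞} [Fact (1 ≤ q)]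
    {S : Set (Lp E q μ)} {C : ℝ} (hbound : ∀ w ∈ S, ∀ᵐ x ∂μ, ‖w x‖ ≤ C) :
    Bornology.IsBounded S := by
  refine isBounded_iff_forall_norm_le.2 ⟨_, fun w hw ↦
    Lp.norm_le_of_ae_bound (abs_nonneg C) ?_⟩
  filter_upwards [hbound w hw] with x hx using hx.trans (le_abs_self C)

theorem exists_isMaxOn_interactionEnergy {S : Set (Lp ℝ 2 μ)} {C : ℝ} (hne : S.Nonempty)
    (hconv : Convex ℝ S) (hclosed : IsClosed S) (hbound : ∀ w ∈ S, ∀ᵐ x ∂μ, ‖w x‖ ≤ C)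
    {k : α × α → ℝ} (hk : Integrable k (μ.prod μ)) {h : α → ℝ} (hh : Integrable h μ) :
    ∃ w ∈ S, IsMaxOn (fun w : Lp ℝ 2 μ ↦ interactionEnergy μ k h w) S w := by
  have hcompact : IsCompact (toWeakSpace ℝ (Lp ℝ 2 μ) '' S) :=
    isCompact_toWeakSpace_image_of_surjective surjective_inclusionInDoubleDualWeak hconv hclosed
      (isBounded_of_ae_norm_le hbound)
  obtain ⟨_, ⟨w, hw, rfl⟩, hmax⟩ := hcompact.exists_isMaxOn (hne.image _)
    (continuousOn_interactionEnergy_toWeakSpace_symm hbound hk hh)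
  exact ⟨w, hw, fun v hv ↦ hmax (mem_image_of_mem _ hv)⟩

end Energy

section BoundedDensities

variable {α : Type*} [MeasurableSpace α] {μ : Measure α} {a b m : ℝ}

/-- The densities with values in `[a, b]` and total mass `m`, the admissible class of the
maximization problem. They are taken in `L²` rather than in `L^∞` with its weak-star topology: on
sets bounded in `L^∞` the weak topology of `L²` agrees with the latter, and in a Hilbert space
bounded closed convex sets are weakly compact. -/
def boundedDensities (μ : Measure α) (a b m : ℝ) : Set (Lp ℝ 2 μ) :=
  {w | (∀ᵐ x ∂μ, a ≤ w x ∧ w x ≤ b) ∧ ∫ x, w x ∂μ = m}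

lemma ae_norm_le_of_mem_boundedDensities {w : Lp ℝ 2 μ} (hw : w ∈ boundedDensities μ a b m) :
    ∀ᵐ x ∂μ, ‖w x‖ ≤ max |a| |b| :=
  hw.1.mono fun _ hx ↦ abs_le_max_abs_abs hx.1 hx.2

variable [IsFiniteMeasure μ]

lemma convex_boundedDensities : Convex ℝ (boundedDensities μ a b m) := by
  rintro v ⟨hv, hvm⟩ w ⟨hw, hwm⟩ s t hs ht hst
  have hcoe : ⇑(s • v + t • w) =ᵐ[μ] fun x ↦ s * v x + t * w x := by
    filter_upwards [Lp.coeFn_add (s • v) (t • w), Lp.coeFn_smul s v, Lp.coeFn_smul t w]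
      with x h₁ h₂ h₃
    simp only [h₁, Pi.add_apply, h₂, h₃, Pi.smul_apply, smul_eq_mul]
  have hint (f : Lp ℝ 2 μ) : Integrable f μ := (Lp.memLp f).integrable one_le_two
  refine ⟨?_, ?_⟩
  · filter_upwards [hcoe, hv, hw] with x hx hvx hwx
    exact hx ▸ convex_Icc a b hvx hwx hs ht hst
  · rw [integral_congr_ae hcoe, integral_add ((hint v).const_mul s) ((hint w).const_mul t),
      integral_const_mul, integral_const_mul, hvm, hwm, ← add_mul, hst, one_mul]

lemma boundedDensities_eq_Icc_inter : boundedDensities μ a b m =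
    Icc (Lp.const 2 μ a) (Lp.const 2 μ b) ∩ {w | ∫ x, w x ∂μ = m} := by
  have hlower (w : Lp ℝ 2 μ) : Lp.const 2 μ a ≤ w ↔ ∀ᵐ x ∂μ, a ≤ w x := by
    rw [← Lp.coeFn_le]
    exact eventually_congr ((Lp.coeFn_const 2 μ a).mono fun x hx ↦ by rw [hx, Function.const_apply])
  have hupper (w : Lp ℝ 2 μ) : w ≤ Lp.const 2 μ b ↔ ∀ᵐ x ∂μ, w x ≤ b := by
    rw [← Lp.coeFn_le]
    exact eventually_congr ((Lp.coeFn_const 2 μ b).mono fun x hx ↦ by rw [hx, Function.const_apply])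
  ext w
  exact and_congr_left' (eventually_and.trans (and_congr (hlower w).symm (hupper w).symm))

lemma isClosed_boundedDensities : IsClosed (boundedDensities μ a b m) := by
  have hmass : Continuous fun w : Lp ℝ 2 μ ↦ ∫ x, w x ∂μ := by
    have hweak := continuous_setIntegral_toWeakSpace_symm (𝕜 := ℝ) .univ (measure_ne_top μ univ)
    simp only [setIntegral_univ] at hweak
    exact hweak.comp (toWeakSpaceCLM ℝ (Lp ℝ 2 μ)).continuous
  rw [boundedDensities_eq_Icc_inter]
  exact isClosed_Icc.inter (isClosed_eq hmass continuous_const)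

lemma exists_mem_boundedDensities_ae_eq {v : α → ℝ} (hmeas : AEStronglyMeasurable v μ)
    (hv : ∀ᵐ x ∂μ, a ≤ v x ∧ v x ≤ b) (hmass : ∫ x, v x ∂μ = m) :
    ∃ w ∈ boundedDensities μ a b m, v =ᵐ[μ] w := by
  have hLp : MemLp v 2 μ := MemLp.of_bound hmeas (max |a| |b|)
    (hv.mono fun _ hx ↦ abs_le_max_abs_abs hx.1 hx.2)
  refine ⟨hLp.toLp v, ⟨?_, ?_⟩, hLp.coeFn_toLp.symm⟩
  · filter_upwards [hv, hLp.coeFn_toLp] with x hx heq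
    rwa [heq]
  · rw [integral_congr_ae hLp.coeFn_toLp, hmass]

end BoundedDensities

section TranslationKernels

lemma integrableOn_comp_sub_prod {G F : Type*} [AddGroup G] [MeasurableSpace G] [MeasurableAdd₂ G]
    [MeasurableNeg G] [NormedAddCommGroup F] [NormedSpace ℝ F] {μ ν : Measure G} [SFinite μ]
    [SFinite ν] [μ.IsAddRightInvariant] {s t u : Set G} (hs : MeasurableSet s)
    (ht : MeasurableSet t) (hu : MeasurableSet u) (hνt : ν t ≠ ∞)
    (hsub : ∀ x ∈ s, ∀ y ∈ t, x - y ∈ u) {f : G → F} (hf : IntegrableOn f u μ) :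
    IntegrableOn (fun p : G × G ↦ f (p.1 - p.2)) (s ×ˢ t) (μ.prod ν) := by
  have hone : Integrable (t.indicator fun _ ↦ (1 : ℝ)) ν :=
    (integrable_indicator_iff ht).2 (integrableOn_const hνt)
  have hconv := hone.convolution_integrand (ContinuousLinearMap.lsmul ℝ ℝ)
    ((integrable_indicator_iff hu).2 hf)
  refine hconv.integrableOn.congr_fun (fun p hp ↦ ?_) (hs.prod ht)
  simp only [ContinuousLinearMap.lsmul_apply, indicator_of_mem hp.2, one_smul,
    indicator_of_mem (hsub p.1 hp.1 p.2 hp.2)]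

lemma integrableOn_inv_norm_sub_ball_prod {V : Type*} [NormedAddCommGroup V] [NormedSpace ℝ V]
    [FiniteDimensional ℝ V] [MeasurableSpace V] [BorelSpace V] {μ : Measure V}
    [μ.IsAddHaarMeasure] (hdim : 1 < Module.finrank ℝ V) (r : ℝ) :
    IntegrableOn (fun p : V × V ↦ ‖p.1 - p.2‖⁻¹) (Metric.ball 0 r ×ˢ Metric.ball 0 r)
      (μ.prod μ) := by
  have hball : IntegrableOn (fun z : V ↦ ‖z‖⁻¹) (Metric.ball 0 (r + r)) μ :=
    integrableOn_ball_of_norm_le_rpow (C := 1) (α := 1) hdim.le (by exact_mod_cast hdim)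
      (.of_forall fun z ↦ by rw [norm_inv, norm_norm, Real.rpow_neg_one, one_mul])
      (by fun_prop)
  refine integrableOn_comp_sub_prod measurableSet_ball measurableSet_ball measurableSet_ball
    measure_ball_lt_top.ne (fun x hx y hy ↦ ?_) hball
  rw [mem_ball_zero_iff] at hx hy ⊢
  exact (norm_sub_le x y).trans_lt (add_lt_add hx hy)

end TranslationKernels

section ReflectedPoint

variable {V : Type*} [NormedAddCommGroup V] [InnerProductSpace ℝ V] {x y : V}

lemma sq_norm_mul_norm_sub_inv_sq_smul (x : V) (hy : y ≠ 0) :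
    (‖y‖ * ‖x - (‖y‖ ^ 2)⁻¹ • y‖) ^ 2 = ‖x - y‖ ^ 2 + (1 - ‖x‖ ^ 2) * (1 - ‖y‖ ^ 2) := by
  have hy' : ‖y‖ ≠ 0 := norm_ne_zero_iff.2 hy
  rw [mul_pow, norm_sub_sq_real, norm_sub_sq_real, inner_smul_right, norm_smul, norm_inv,
    norm_pow, norm_norm]
  field_simp
  ring

lemma norm_sub_le_norm_mul_norm_sub_inv_sq_smul (hx : ‖x‖ ≤ 1) (hy : ‖y‖ ≤ 1) (hy₀ : y ≠ 0) :
    ‖x - y‖ ≤ ‖y‖ * ‖x - (‖y‖ ^ 2)⁻¹ • y‖ := by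
  refine le_of_sq_le_sq ?_ (by positivity)
  rw [sq_norm_mul_norm_sub_inv_sq_smul x hy₀, le_add_iff_nonneg_right]
  exact mul_nonneg (sub_nonneg.2 (pow_le_one₀ (norm_nonneg x) hx))
    (sub_nonneg.2 (pow_le_one₀ (norm_nonneg y) hy))

lemma norm_mul_norm_sub_inv_sq_smul_le (x : V) (hy : y ≠ 0) :
    ‖y‖ * ‖x - (‖y‖ ^ 2)⁻¹ • y‖ ≤ 1 + ‖x‖ * ‖y‖ := by
  have hy' : ‖y‖ ≠ 0 := norm_ne_zero_iff.2 hy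
  calc ‖y‖ * ‖x - (‖y‖ ^ 2)⁻¹ • y‖ ≤ ‖y‖ * (‖x‖ + ‖(‖y‖ ^ 2)⁻¹ • y‖) := by
        gcongr
        exact norm_sub_le _ _
    _ = 1 + ‖x‖ * ‖y‖ := by
        rw [norm_smul, norm_inv, norm_pow, norm_norm]
        field_simp
        ring

end ReflectedPoint

section GreenFunction

lemma greenG_eq_log_div {x y : E2} (hxy : x ≠ y) (hy : y ≠ 0) (hy' : x ≠ (‖y‖ ^ 2)⁻¹ • y) :
    greenG x y = (2 * π)⁻¹ * Real.log (‖y‖ * ‖x - (‖y‖ ^ 2)⁻¹ • y‖ / ‖x - y‖) := by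
  have hnum : ‖x - (‖y‖ ^ 2)⁻¹ • y‖ ≠ 0 := norm_ne_zero_iff.2 (sub_ne_zero.2 hy')
  rw [Real.log_div (mul_ne_zero (norm_ne_zero_iff.2 hy) hnum)
    (norm_ne_zero_iff.2 (sub_ne_zero.2 hxy)), Real.log_mul (norm_ne_zero_iff.2 hy) hnum]
  simp only [greenG, greenh]
  ring

lemma abs_greenG_le {x y : E2} (hx : ‖x‖ ≤ 1) (hy : ‖y‖ ≤ 1) (hxy : x ≠ y) (hy₀ : y ≠ 0) :
    |greenG x y| ≤ π⁻¹ * ‖x - y‖⁻¹ := by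
  have hdist : 0 < ‖x - y‖ := norm_sub_pos_iff.2 hxy
  set R := ‖y‖ * ‖x - (‖y‖ ^ 2)⁻¹ • y‖ with hR
  have hlower : ‖x - y‖ ≤ R := norm_sub_le_norm_mul_norm_sub_inv_sq_smul hx hy hy₀
  have hupper : R ≤ 2 := (norm_mul_norm_sub_inv_sq_smul_le x hy₀).trans
    (by linarith [mul_le_one₀ hx (norm_nonneg y) hy])
  have hreflect : x ≠ (‖y‖ ^ 2)⁻¹ • y := fun h ↦
    (hdist.trans_le hlower).ne' (by rw [hR, sub_eq_zero.2 h, norm_zero, mul_zero])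
  have hratio : 1 ≤ R / ‖x - y‖ := (one_le_div hdist).2 hlower
  rw [greenG_eq_log_div hxy hy₀ hreflect, ← hR,
    abs_of_nonneg (mul_nonneg (by positivity) (Real.log_nonneg hratio))]
  calc (2 * π)⁻¹ * Real.log (R / ‖x - y‖) ≤ (2 * π)⁻¹ * (2 / ‖x - y‖) := by
        gcongr
        exact (Real.log_le_self (zero_le_one.trans hratio)).trans (by gcongr)
    _ = π⁻¹ * ‖x - y‖⁻¹ := by
        field_simp

lemma ae_muD_norm_lt_one : ∀ᵐ x ∂muD, ‖x‖ < 1 := by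
  filter_upwards [ae_restrict_mem measurableSet_ball] with x hx using mem_ball_zero_iff.1 hx

instance isFiniteMeasure_muD : IsFiniteMeasure muD :=
  isFiniteMeasure_restrict.2 measure_ball_lt_top.ne

lemma integrable_greenG : Integrable (fun p : E2 × E2 ↦ greenG p.1 p.2) (muD.prod muD) := by
  have hdim : 1 < Module.finrank ℝ E2 := by simp
  have hmeas : Measurable fun p : E2 × E2 ↦ greenG p.1 p.2 := by
    unfold greenG greenh
    fun_prop
  have hinv : Integrable (fun p : E2 × E2 ↦ ‖p.1 - p.2‖⁻¹) (muD.prod muD) := by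
    rw [muD, Measure.prod_restrict]
    exact integrableOn_inv_norm_sub_ball_prod hdim 1
  have hne (z : E2) : ∀ᵐ x ∂muD, x ≠ z := ae_restrict_of_ae (Measure.ae_ne volume z)
  have hne_diag : ∀ᵐ p ∂muD.prod muD, p.1 ≠ p.2 :=
    (Measure.ae_prod_mem_iff_ae_ae_mem measurableSet_diagonal.compl).2
      (.of_forall fun x ↦ (hne x).mono fun y hy ↦ hy.symm)
  refine (hinv.const_mul π⁻¹).mono' hmeas.aestronglyMeasurable ?_
  filter_upwards [hne_diag, Measure.quasiMeasurePreserving_fst.ae ae_muD_norm_lt_one,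
    Measure.quasiMeasurePreserving_snd.ae ae_muD_norm_lt_one,
    Measure.quasiMeasurePreserving_snd.ae (hne 0)] with p hxy hx hy hy₀
  exact abs_greenG_le hx.le hy.le hxy hy₀

lemma integrable_sq_norm_muD : Integrable (fun x : E2 ↦ ‖x‖ ^ 2) muD := by
  refine .of_bound (by fun_prop) 1 ?_
  filter_upwards [ae_muD_norm_lt_one] with x hx
  rw [norm_pow, norm_norm]
  exact pow_le_one₀ (norm_nonneg x) hx.le

end GreenFunction

section Disk

lemma muD_real_univ : muD.real univ = π := by
  simp [muD, diskD, Measure.real, EuclideanSpace.volume_ball_fin_two, pi_pos.le]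

lemma nonempty_Kset {lam : ℝ} (hlam : 1 / π ≤ lam) : (Kset lam).Nonempty := by
  refine ⟨fun _ ↦ 1 / π, aemeasurable_const, .of_forall fun _ ↦ ⟨by positivity, hlam⟩, ?_⟩
  rw [integral_const, muD_real_univ, smul_eq_mul, mul_one_div_cancel pi_ne_zero]

lemma calE_eq_interactionEnergy {Ω C : ℝ} {w : E2 → ℝ} (hmeas : AEStronglyMeasurable w muD)
    (hbound : ∀ᵐ x ∂muD, ‖w x‖ ≤ C) :
    calE Ω w = interactionEnergy muD (fun p ↦ 1 / 2 * greenG p.1 p.2)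
      (fun x ↦ Ω / 2 * ‖x‖ ^ 2) w := by
  have hint : Integrable (fun p : E2 × E2 ↦ greenG p.1 p.2 * (w p.1 * w p.2)) (muD.prod muD) :=
    integrable_greenG.mul_bdd (hmeas.comp_fst.mul hmeas.comp_snd)
      (ae_norm_mul_prod_le hbound hbound)
  have hEfun : Efun w = ∫ p, 1 / 2 * greenG p.1 p.2 * (w p.1 * w p.2) ∂muD.prod muD := by
    simp only [mul_assoc (1 / 2 : ℝ)]
    rw [integral_const_mul, integral_prod _ hint]
    simp only [Efun, muD, mul_assoc]
  rw [calE, interactionEnergy, hEfun, ← integral_const_mul]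
  simp only [muD, mul_assoc]

lemma calE_eq_interactionEnergy_of_mem_Kset {Ω lam : ℝ} {w : E2 → ℝ} (hw : w ∈ Kset lam) :
    calE Ω w = interactionEnergy muD (fun p ↦ 1 / 2 * greenG p.1 p.2)
      (fun x ↦ Ω / 2 * ‖x‖ ^ 2) w :=
  calE_eq_interactionEnergy hw.1.aestronglyMeasurable
    (hw.2.1.mono fun _ hx ↦ (Real.norm_of_nonneg hx.1).trans_le hx.2)

lemma coeFn_mem_Kset {lam : ℝ} {w : Lp ℝ 2 muD} (hw : w ∈ boundedDensities muD 0 lam 1) :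
    ⇑w ∈ Kset lam :=
  ⟨(Lp.aestronglyMeasurable w).aemeasurable, hw⟩

lemma exists_mem_boundedDensities_ae_eq_of_mem_Kset {lam : ℝ} {v : E2 → ℝ} (hv : v ∈ Kset lam) :
    ∃ w ∈ boundedDensities muD 0 lam 1, v =ᵐ[muD] w :=
  exists_mem_boundedDensities_ae_eq hv.1.aestronglyMeasurable hv.2.1 hv.2.2

end Disk

theorem stmt5_general (Ω lam : ℝ) (hlam : 1 / π ≤ lam) :
    BddAbove (calE Ω '' Kset lam) ∧
    ∃ w ∈ Kset lam, ∀ v ∈ Kset lam, calE Ω v ≤ calE Ω w := by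
  obtain ⟨v₀, hv₀⟩ := nonempty_Kset hlam
  obtain ⟨w₀, hw₀, -⟩ := exists_mem_boundedDensities_ae_eq_of_mem_Kset hv₀
  obtain ⟨w, hw, hmax⟩ := exists_isMaxOn_interactionEnergy ⟨w₀, hw₀⟩ convex_boundedDensities
    isClosed_boundedDensities (fun _ ↦ ae_norm_le_of_mem_boundedDensities)
    (integrable_greenG.const_mul (1 / 2)) (integrable_sq_norm_muD.const_mul (Ω / 2))
  have hle : ∀ v ∈ Kset lam, calE Ω v ≤ calE Ω w := by
    intro v hv
    obtain ⟨v', hv', hvv'⟩ := exists_mem_boundedDensities_ae_eq_of_mem_Kset hv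
    rw [calE_eq_interactionEnergy_of_mem_Kset hv, interactionEnergy_congr_ae hvv',
      calE_eq_interactionEnergy_of_mem_Kset (coeFn_mem_Kset hw)]
    exact hmax hv'
  exact ⟨⟨calE Ω w, forall_mem_image.2 hle⟩, w, coeFn_mem_Kset hw, hle⟩

theorem stmt5 (Ω lam : ℝ) (hΩ : 0 < Ω) (hlam : 1/π < lam) :
    BddAbove (calE Ω '' Kset lam) ∧
    ∃ w ∈ Kset lam, ∀ v ∈ Kset lam, calE Ω v ≤ calE Ω w :=
  stmt5_general Ω lam hlam.le
end
end

section
/- Let D be the unit disk, λ > 1/|D|, Ω > 0, and let w^λ be a maximizer of ℰ over K_λ(D). Then w^λ is the unique maximizer over K_λ(D) of the linear functional Q(w) = ∫_D (Gw^λ(x) + (Ω/2)|x|²) w(x) dx. -/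
open MeasureTheory Real Set Filter Topology ENNReal
noncomputable section
/-- The linearized functional Q(w) = ∫_D (Gw^λ + (Ω/2)|x|²) w. -/
def calQ (Ω : ℝ) (wlam w : E2 → ℝ) : ℝ :=
  ∫ x in diskD, ((∫ y in diskD, greenG x y * wlam y) + (Ω/2) * ‖x‖^2) * w x

/-! The energy `ℰ` is quadratic with second-order part `E`, so
`Q(v) - Q(w) = ℰ(v) - ℰ(w) - E(v - w)`, and everything rests on `E` being positive definite.
Now `4πG = -log (1 - k)`, where `k` is the kernel with feature map `(1 - |z|²) zᵃ z̄ᵇ`. In the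
expansion `-log (1 - k) = ∑ kⁿ / n` every power is positive semidefinite by the Schur product
theorem, and the term `n = 1` gives `8π E(f) ≥ |∫ f (1 - |z|²) zᵃ z̄ᵇ|²` for all `a` and `b`.
Hence `E(f) ≤ 0` forces all moments of `(1 - |z|²) f`, and with them its Fourier transform, to
vanish. -/

open scoped ComplexConjugate RealInnerProductSpace

section Integration

lemma abs_mul_le_sq_add_sq (a b : ℝ) : |a * b| ≤ a ^ 2 + b ^ 2 := by
  rw [abs_le]
  constructor <;> nlinarith [sq_nonneg (a + b), sq_nonneg (a - b)]

lemma ae_prod_fst_ne_snd {α : Type*} [MeasurableSpace α] [MeasurableEq α] (μ ν : Measure α)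
    [SFinite ν] [NullSingletonClass ν] : ∀ᵐ p ∂(μ.prod ν), p.1 ≠ p.2 := by
  have hmeas : MeasurableSet {p : α × α | p.1 ≠ p.2} :=
    (measurableSet_eq_fun measurable_fst measurable_snd).compl
  rw [Measure.ae_prod_iff_ae_ae hmeas]
  refine ae_of_all _ fun x => ?_
  filter_upwards [Measure.ae_ne ν x] with y hy using hy.symm

variable {β : Type*} [MeasurableSpace β] {ν : Measure β}

lemma hasSum_integral_pow_div_mul {k g : β → ℝ} (hk : AEMeasurable k ν)
    (hg : AEStronglyMeasurable g ν) (hk01 : ∀ᵐ p ∂ν, k p ∈ Ico 0 1)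
    (hint : Integrable (fun p => -Real.log (1 - k p) * g p) ν) :
    HasSum (fun n : ℕ => ∫ p, k p ^ (n + 1) / (n + 1) * g p ∂ν)
      (∫ p, -Real.log (1 - k p) * g p ∂ν) := by
  have hlog : ∀ᵐ p ∂ν,
      HasSum (fun n : ℕ => k p ^ (n + 1) / ((n : ℝ) + 1)) (-Real.log (1 - k p)) := by
    filter_upwards [hk01] with p ⟨hp0, hp1⟩
    exact Real.hasSum_pow_div_log_of_abs_lt_one (by rwa [abs_of_nonneg hp0])
  refine hasSum_integral_of_dominated_convergence
    (fun n p => k p ^ (n + 1) / ((n : ℝ) + 1) * ‖g p‖)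
    (fun n => ((hk.pow_const _).div_const _).aestronglyMeasurable.mul hg) (fun n => ?_) ?_ ?_ ?_
  · filter_upwards [hk01] with p ⟨hp0, _⟩
    rw [norm_mul, Real.norm_of_nonneg (by positivity)]
  · filter_upwards [hlog] with p hp using (hp.mul_right _).summable
  · refine hint.norm.congr ?_
    filter_upwards [hlog, hk01] with p hp ⟨hp0, _⟩
    rw [(hp.mul_right _).tsum_eq, norm_mul,
      Real.norm_of_nonneg (hp.nonneg fun n => by positivity)]
  · filter_upwards [hlog] with p hp using hp.mul_right _

lemma integrable_comp_sub_mul {G : Type*} [AddGroup G] [MeasurableSpace G] [MeasurableAdd₂ G]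
    [MeasurableNeg G] {μ ν : Measure G} [SFinite μ] [μ.IsAddRightInvariant] [SFinite ν]
    {s t : Set G} (hs : MeasurableSet s) {h f : G → ℝ} (hh : IntegrableOn h s μ)
    (hf : Integrable f ν) (hst : ∀ᵐ p ∂(μ.restrict t).prod ν, p.1 - p.2 ∈ s) :
    Integrable (fun p : G × G => h (p.1 - p.2) * f p.2) ((μ.restrict t).prod ν) := by
  have hconv := hf.convolution_integrand (ContinuousLinearMap.mul ℝ ℝ)
    ((integrable_indicator_iff hs).2 hh)
  have hrestr : (μ.restrict t).prod ν ≤ μ.prod ν :=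
    Measure.prod_mono Measure.restrict_le_self le_rfl
  refine (hconv.mono_measure hrestr).congr ?_
  filter_upwards [hst] with p hp
  rw [ContinuousLinearMap.mul_apply', indicator_of_mem hp, mul_comm]

end Integration

section FourierUniqueness

variable {E : Type*} [NormedAddCommGroup E] [InnerProductSpace ℝ E] [MeasurableSpace E]
  {μ : Measure E} {f : E → ℝ}

lemma charFun_withDensity_ofReal (hf : AEMeasurable f μ) (t : E) :
    charFun (μ.withDensity fun x => ENNReal.ofReal (f x)) t =
      ∫ x, ((max (f x) 0 : ℝ) : ℂ) * Complex.exp ((⟪x, t⟫ : ℝ) * Complex.I) ∂μ := by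
  rw [charFun_apply, integral_withDensity_eq_integral_toReal_smul₀ hf.ennreal_ofReal
    (ae_of_all _ fun _ => ENNReal.ofReal_lt_top)]
  simp only [ENNReal.toReal_ofReal', Complex.real_smul]

variable [BorelSpace E] [SecondCountableTopology E]

lemma integrable_mul_exp_inner (hf : Integrable f μ) (t : E) :
    Integrable (fun x => (f x : ℂ) * Complex.exp ((⟪x, t⟫ : ℝ) * Complex.I)) μ :=
  hf.ofReal.mul_bdd (c := 1) (by fun_prop)
    (ae_of_all _ fun x => (Complex.norm_exp_ofReal_mul_I _).le)

theorem ae_eq_zero_of_forall_integral_mul_exp_inner_eq_zero [CompleteSpace E]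
    (hf : Integrable f μ)
    (h : ∀ t : E, ∫ x, (f x : ℂ) * Complex.exp ((⟪x, t⟫ : ℝ) * Complex.I) ∂μ = 0) :
    f =ᵐ[μ] 0 := by
  have hneg : Integrable (fun x => -f x) μ := hf.neg
  have hfin : IsFiniteMeasure (μ.withDensity fun x => ENNReal.ofReal (f x)) :=
    isFiniteMeasure_withDensity_ofReal hf.2
  have hfin' : IsFiniteMeasure (μ.withDensity fun x => ENNReal.ofReal (-f x)) :=
    isFiniteMeasure_withDensity_ofReal hneg.2
  have hmeas : μ.withDensity (fun x => ENNReal.ofReal (f x)) =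
      μ.withDensity (fun x => ENNReal.ofReal (-f x)) := by
    refine Measure.ext_of_charFun (funext fun t => ?_)
    rw [charFun_withDensity_ofReal hf.aemeasurable, charFun_withDensity_ofReal hneg.aemeasurable,
      ← sub_eq_zero, ← integral_sub (integrable_mul_exp_inner hf.pos_part t)
        (integrable_mul_exp_inner hf.neg_part t), ← h t]
    refine integral_congr_ae (ae_of_all _ fun x => ?_)
    simp only [← sub_mul, ← Complex.ofReal_sub]
    rw [max_zero_sub_eq_self]
  rw [withDensity_eq_iff hf.aemeasurable.ennreal_ofReal hneg.aemeasurable.ennreal_ofReal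
    hf.lintegral_lt_top.ne] at hmeas
  filter_upwards [hmeas] with x hx
  rcases le_total (f x) 0 with hx0 | hx0
  · rw [ENNReal.ofReal_of_nonpos hx0, eq_comm, ENNReal.ofReal_eq_zero] at hx
    exact le_antisymm hx0 (neg_nonpos.1 hx)
  · rw [ENNReal.ofReal_of_nonpos (neg_nonpos.2 hx0), ENNReal.ofReal_eq_zero] at hx
    exact le_antisymm hx hx0

theorem ae_eq_zero_of_forall_integral_mul_inner_pow_eq_zero [CompleteSpace E]
    {R : ℝ} (hR : ∀ᵐ x ∂μ, ‖x‖ ≤ R) (hf : Integrable f μ)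
    (h : ∀ (t : E) (n : ℕ), ∫ x, f x * ⟪x, t⟫ ^ n ∂μ = 0) : f =ᵐ[μ] 0 := by
  refine ae_eq_zero_of_forall_integral_mul_exp_inner_eq_zero hf fun t => ?_
  have hsum : HasSum
      (fun n : ℕ => ∫ x, (f x : ℂ) * (((⟪x, t⟫ : ℝ) * Complex.I) ^ n / n.factorial) ∂μ)
      (∫ x, (f x : ℂ) * Complex.exp ((⟪x, t⟫ : ℝ) * Complex.I) ∂μ) := by
    refine hasSum_integral_of_dominated_convergence
      (fun n x => ‖f x‖ * ((R * ‖t‖) ^ n / n.factorial)) (fun n => ?_) (fun n => ?_) ?_ ?_ ?_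
    · exact hf.ofReal.aestronglyMeasurable.mul (by fun_prop)
    · filter_upwards [hR] with x hx
      simp only [norm_mul, norm_div, norm_pow, Complex.norm_real, Complex.norm_I, mul_one,
        Complex.norm_natCast]
      gcongr
      exact (norm_inner_le_norm x t).trans (by gcongr)
    · exact ae_of_all _ fun x => (Real.summable_pow_div_factorial _).mul_left _
    · simp only [tsum_mul_left]
      exact hf.norm.mul_const _
    · refine ae_of_all _ fun x => HasSum.mul_left _ ?_
      rw [Complex.exp_eq_exp_ℂ]
      exact NormedSpace.expSeries_div_hasSum_exp _
  have hterm : ∀ n : ℕ,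
      ∫ x, (f x : ℂ) * (((⟪x, t⟫ : ℝ) * Complex.I) ^ n / n.factorial) ∂μ = 0 := fun n => by
    calc ∫ x, (f x : ℂ) * (((⟪x, t⟫ : ℝ) * Complex.I) ^ n / n.factorial) ∂μ
        = ∫ x, ((f x * ⟪x, t⟫ ^ n : ℝ) : ℂ) * (Complex.I ^ n / n.factorial) ∂μ := by
          congr 1 with x
          push_cast
          ring
      _ = 0 := by rw [integral_mul_const, integral_complex_ofReal, h, Complex.ofReal_zero, zero_mul]
  simp only [hterm] at hsum
  exact hsum.unique hasSum_zero

end FourierUniqueness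

section FeatureExpansion

universe u

variable {α : Type*} [MeasurableSpace α]

/-- The functions `φ i` are the coordinates of a feature map of the kernel `k` on `s`:
`k x y = ∑ i, φ i x * conj (φ i y)` for `x, y ∈ s`. Such a `k` is positive semidefinite on `s`. -/
structure IsFeatureExpansionOn {ι : Type u} (φ : ι → α → ℂ) (k : α → α → ℝ) (s : Set α) :
    Prop where
  measurable : ∀ i, Measurable (φ i)
  hasSum : ∀ ⦃x⦄, x ∈ s → ∀ ⦃y⦄, y ∈ s → HasSum (fun i => φ i x * conj (φ i y)) (k x y : ℂ)

namespace IsFeatureExpansionOn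

variable {ι : Type u} {φ : ι → α → ℂ} {k l : α → α → ℝ} {s : Set α}

lemma hasSum_sq_norm (h : IsFeatureExpansionOn φ k s) {x : α} (hx : x ∈ s) :
    HasSum (fun i => ‖φ i x‖ ^ 2) (k x x) := by
  have hxx := h.hasSum hx hx
  simp only [Complex.mul_conj, Complex.normSq_eq_norm_sq] at hxx
  exact_mod_cast hxx

lemma comp {β : Type*} [MeasurableSpace β] (h : IsFeatureExpansionOn φ k s) {g : β → α}
    (hg : Measurable g) {t : Set β} (hgt : MapsTo g t s) :
    IsFeatureExpansionOn (fun i x => φ i (g x)) (fun x y => k (g x) (g y)) t where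
  measurable i := (h.measurable i).comp hg
  hasSum _ hx _ hy := h.hasSum (hgt hx) (hgt hy)

lemma mul {κ : Type*} {ψ : κ → α → ℂ} (hk : IsFeatureExpansionOn φ k s)
    (hl : IsFeatureExpansionOn ψ l s) :
    IsFeatureExpansionOn (fun (i : ι × κ) x => φ i.1 x * ψ i.2 x)
      (fun x y => k x y * l x y) s where
  measurable i := (hk.measurable i.1).mul (hl.measurable i.2)
  hasSum x hx y hy := by
    have hsummable := summable_mul_of_summable_norm
      (hk.hasSum hx hy).summable.norm (hl.hasSum hx hy).summable.norm
    have hkl := (hk.hasSum hx hy).mul (hl.hasSum hx hy) hsummable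
    rw [← Complex.ofReal_mul] at hkl
    refine hkl.congr_fun fun i => ?_
    rw [map_mul]
    ring

lemma exists_pow [Countable ι] (h : IsFeatureExpansionOn φ k s) (n : ℕ) :
    ∃ (κ : Type u) (_ : Countable κ) (ψ : κ → α → ℂ),
      IsFeatureExpansionOn ψ (fun x y => k x y ^ n) s := by
  induction n with
  | zero =>
    refine ⟨PUnit, inferInstance, fun _ _ => 1, fun _ => measurable_const, fun x _ y _ => ?_⟩
    simp
  | succ n ih =>
    obtain ⟨κ, hκ, ψ, hψ⟩ := ih
    exact ⟨κ × ι, inferInstance, _, by simpa only [pow_succ] using hψ.mul h⟩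

section Integral

variable [Countable ι] {μ : Measure α} {f : α → ℝ}

lemma hasSum_integral_mul_conj (h : IsFeatureExpansionOn φ k s) (hs : ∀ᵐ x ∂μ, x ∈ s)
    (hf : Integrable f μ) (hkf : Integrable (fun x => k x x * f x) μ) :
    HasSum
      (fun i => ∫ p, ((f p.1 : ℂ) * φ i p.1) * conj ((f p.2 : ℂ) * φ i p.2) ∂(μ.prod μ))
      (∫ p, ((k p.1 p.2 * (f p.1 * f p.2) : ℝ) : ℂ) ∂(μ.prod μ)) := by
  have hs₁ : ∀ᵐ p ∂(μ.prod μ), p.1 ∈ s := Measure.quasiMeasurePreserving_fst.ae hs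
  have hs₂ : ∀ᵐ p ∂(μ.prod μ), p.2 ∈ s := Measure.quasiMeasurePreserving_snd.ae hs
  have hdom : ∀ p : α × α, p.1 ∈ s → p.2 ∈ s →
      HasSum (fun i => ‖f p.1 * f p.2‖ * (‖φ i p.1‖ ^ 2 + ‖φ i p.2‖ ^ 2))
        (‖f p.1 * f p.2‖ * (k p.1 p.1 + k p.2 p.2)) := fun p hp₁ hp₂ =>
    ((h.hasSum_sq_norm hp₁).add (h.hasSum_sq_norm hp₂)).mul_left _
  refine hasSum_integral_of_dominated_convergence
    (fun i p => ‖f p.1 * f p.2‖ * (‖φ i p.1‖ ^ 2 + ‖φ i p.2‖ ^ 2))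
    (fun i => ?_) (fun i => ae_of_all _ fun p => ?_) ?_ ?_ ?_
  · have hfφ : AEStronglyMeasurable (fun x => (f x : ℂ) * φ i x) μ :=
      hf.ofReal.aestronglyMeasurable.mul (h.measurable i).aestronglyMeasurable
    exact hfφ.comp_fst.mul (Complex.continuous_conj.comp_aestronglyMeasurable hfφ.comp_snd)
  · calc ‖((f p.1 : ℂ) * φ i p.1) * conj ((f p.2 : ℂ) * φ i p.2)‖
        = ‖f p.1 * f p.2‖ * (‖φ i p.1‖ * ‖φ i p.2‖) := by
          simp only [norm_mul, RCLike.norm_conj, Complex.norm_real]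
          ring
      _ ≤ ‖f p.1 * f p.2‖ * (‖φ i p.1‖ ^ 2 + ‖φ i p.2‖ ^ 2) := by
          gcongr
          exact (le_abs_self _).trans (abs_mul_le_sq_add_sq _ _)
  · filter_upwards [hs₁, hs₂] with p hp₁ hp₂ using (hdom p hp₁ hp₂).summable
  · refine ((hkf.norm.mul_prod hf.norm).add (hf.norm.mul_prod hkf.norm)).congr ?_
    filter_upwards [hs₁, hs₂] with p hp₁ hp₂
    have hk₁ := (h.hasSum_sq_norm hp₁).nonneg fun i => sq_nonneg _
    have hk₂ := (h.hasSum_sq_norm hp₂).nonneg fun i => sq_nonneg _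
    rw [(hdom p hp₁ hp₂).tsum_eq]
    simp only [Pi.add_apply, norm_mul, Real.norm_of_nonneg hk₁, Real.norm_of_nonneg hk₂]
    ring
  · filter_upwards [hs₁, hs₂] with p hp₁ hp₂
    have hp := (h.hasSum hp₁ hp₂).mul_right ((f p.1 * f p.2 : ℝ) : ℂ)
    rw [← Complex.ofReal_mul] at hp
    refine hp.congr_fun fun i => ?_
    simp only [map_mul, Complex.conj_ofReal, Complex.ofReal_mul]
    ring

variable [SFinite μ]

lemma hasSum_sq_norm_integral (h : IsFeatureExpansionOn φ k s) (hs : ∀ᵐ x ∂μ, x ∈ s)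
    (hf : Integrable f μ) (hkf : Integrable (fun x => k x x * f x) μ) :
    HasSum (fun i => ‖∫ x, (f x : ℂ) * φ i x ∂μ‖ ^ 2)
      (∫ p, k p.1 p.2 * (f p.1 * f p.2) ∂(μ.prod μ)) := by
  have hsum := h.hasSum_integral_mul_conj hs hf hkf
  have hfubini : ∀ i, ∫ p, ((f p.1 : ℂ) * φ i p.1) * conj ((f p.2 : ℂ) * φ i p.2) ∂(μ.prod μ) =
      ((‖∫ x, (f x : ℂ) * φ i x ∂μ‖ ^ 2 : ℝ) : ℂ) := fun i => by
    rw [integral_prod_mul (fun x => (f x : ℂ) * φ i x) (fun x => conj ((f x : ℂ) * φ i x)),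
      integral_conj, Complex.mul_conj, Complex.normSq_eq_norm_sq]
  simp only [hfubini, integral_complex_ofReal] at hsum
  exact_mod_cast hsum

lemma integral_pow_mul_nonneg (h : IsFeatureExpansionOn φ k s) (hs : ∀ᵐ x ∂μ, x ∈ s)
    (hdiag : ∀ x ∈ s, k x x = 1) (hf : Integrable f μ) (n : ℕ) :
    0 ≤ ∫ p, k p.1 p.2 ^ n * (f p.1 * f p.2) ∂(μ.prod μ) := by
  obtain ⟨κ, hκ, ψ, hψ⟩ := h.exists_pow n
  refine (hψ.hasSum_sq_norm_integral hs hf (hf.congr ?_)).nonneg fun i => sq_nonneg _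
  filter_upwards [hs] with x hx
  rw [hdiag x hx, one_pow, one_mul]

theorem sq_norm_integral_le_integral_neg_log (h : IsFeatureExpansionOn φ k s)
    (hs : ∀ᵐ x ∂μ, x ∈ s) (hdiag : ∀ x ∈ s, k x x = 1)
    (hk : AEMeasurable (fun p : α × α => k p.1 p.2) (μ.prod μ))
    (hk01 : ∀ᵐ p ∂(μ.prod μ), k p.1 p.2 ∈ Ico 0 1) (hf : Integrable f μ)
    (hint : Integrable (fun p => -Real.log (1 - k p.1 p.2) * (f p.1 * f p.2)) (μ.prod μ)) (i : ι) :
    ‖∫ x, (f x : ℂ) * φ i x ∂μ‖ ^ 2 ≤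
      ∫ p, -Real.log (1 - k p.1 p.2) * (f p.1 * f p.2) ∂(μ.prod μ) := by
  have hsum := hasSum_integral_pow_div_mul hk
    (hf.aestronglyMeasurable.comp_fst.mul hf.aestronglyMeasurable.comp_snd) hk01 hint
  have hterm : ∀ n : ℕ,
      0 ≤ ∫ p, k p.1 p.2 ^ (n + 1) / ((n : ℝ) + 1) * (f p.1 * f p.2) ∂(μ.prod μ) := fun n => by
    simp only [div_mul_eq_mul_div]
    rw [integral_div]
    exact div_nonneg (h.integral_pow_mul_nonneg hs hdiag hf (n + 1)) (by positivity)
  have hkf : Integrable (fun x => k x x * f x) μ := by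
    refine hf.congr ?_
    filter_upwards [hs] with x hx
    rw [hdiag x hx, one_mul]
  calc ‖∫ x, (f x : ℂ) * φ i x ∂μ‖ ^ 2
      ≤ ∫ p, k p.1 p.2 * (f p.1 * f p.2) ∂(μ.prod μ) :=
        le_hasSum (h.hasSum_sq_norm_integral hs hf hkf) i fun j _ => sq_nonneg _
    _ ≤ ∫ p, -Real.log (1 - k p.1 p.2) * (f p.1 * f p.2) ∂(μ.prod μ) := by
        simpa using le_hasSum hsum 0 fun n _ => hterm n

end Integral

end IsFeatureExpansionOn

end FeatureExpansion

section HyperbolicKernel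

variable {E : Type*} [NormedAddCommGroup E] {x y : E}

/-- The square of Ahlfors' bracket `[x, y]`. In an inner product space it is `‖y‖² ‖x - y*‖²`,
where `y* = y / ‖y‖²` is the inversion of `y ≠ 0` in the unit sphere. -/
def ahlforsBracketSq (x y : E) : ℝ :=
  ‖x - y‖ ^ 2 + (1 - ‖x‖ ^ 2) * (1 - ‖y‖ ^ 2)

/-- The kernel `1 - ρ²`, where `ρ(x, y) = ‖x - y‖ / [x, y]` is the pseudo-hyperbolic distance of the
unit ball. On the unit disk it is `|S(x, y)|² / (S(x, x) S(y, y))` for the Szegő kernel `S`, and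
`-log (1 - ρ²)` is `4π` times the Green's function. -/
def hyperbolicKernel (x y : E) : ℝ :=
  (1 - ‖x‖ ^ 2) * (1 - ‖y‖ ^ 2) / ahlforsBracketSq x y

lemma one_sub_norm_sq_pos (hx : x ∈ Metric.ball 0 1) : 0 < 1 - ‖x‖ ^ 2 := by
  rw [mem_ball_zero_iff] at hx
  nlinarith [norm_nonneg x]

lemma ahlforsBracketSq_comm (x y : E) : ahlforsBracketSq x y = ahlforsBracketSq y x := by
  rw [ahlforsBracketSq, ahlforsBracketSq, norm_sub_rev, mul_comm (1 - ‖x‖ ^ 2)]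

lemma ahlforsBracketSq_pos (hx : x ∈ Metric.ball 0 1) (hy : y ∈ Metric.ball 0 1) :
    0 < ahlforsBracketSq x y := by
  have hxy := mul_pos (one_sub_norm_sq_pos hx) (one_sub_norm_sq_pos hy)
  unfold ahlforsBracketSq
  positivity

lemma ahlforsBracketSq_le (x y : E) : ahlforsBracketSq x y ≤ (1 + ‖x‖ * ‖y‖) ^ 2 := by
  have hsub : ‖x - y‖ ^ 2 ≤ (‖x‖ + ‖y‖) ^ 2 := by
    gcongr
    exact norm_sub_le x y
  unfold ahlforsBracketSq
  linarith

lemma hyperbolicKernel_comm (x y : E) : hyperbolicKernel x y = hyperbolicKernel y x := by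
  rw [hyperbolicKernel, hyperbolicKernel, ahlforsBracketSq_comm, mul_comm (1 - ‖x‖ ^ 2)]

lemma one_sub_hyperbolicKernel (hx : x ∈ Metric.ball 0 1) (hy : y ∈ Metric.ball 0 1) :
    1 - hyperbolicKernel x y = ‖x - y‖ ^ 2 / ahlforsBracketSq x y := by
  rw [hyperbolicKernel, one_sub_div (ahlforsBracketSq_pos hx hy).ne', ahlforsBracketSq,
    add_sub_cancel_right]

lemma hyperbolicKernel_self (hx : x ∈ Metric.ball 0 1) : hyperbolicKernel x x = 1 := by
  have hxx := one_sub_hyperbolicKernel hx hx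
  rw [sub_self, norm_zero, zero_pow two_ne_zero, zero_div] at hxx
  linarith

lemma hyperbolicKernel_mem_Ico (hx : x ∈ Metric.ball 0 1) (hy : y ∈ Metric.ball 0 1)
    (hxy : x ≠ y) : hyperbolicKernel x y ∈ Ico 0 1 := by
  have hbracket := ahlforsBracketSq_pos hx hy
  constructor
  · exact div_nonneg (mul_pos (one_sub_norm_sq_pos hx) (one_sub_norm_sq_pos hy)).le hbracket.le
  · have hdist : 0 < ‖x - y‖ ^ 2 / ahlforsBracketSq x y := by
      have := norm_sub_pos_iff.2 hxy
      positivity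
    linarith [one_sub_hyperbolicKernel hx hy]

lemma neg_log_one_sub_hyperbolicKernel_nonneg (hx : x ∈ Metric.ball 0 1)
    (hy : y ∈ Metric.ball 0 1) (hxy : x ≠ y) : 0 ≤ -Real.log (1 - hyperbolicKernel x y) := by
  obtain ⟨hk0, hk1⟩ := hyperbolicKernel_mem_Ico hx hy hxy
  exact neg_nonneg.2 (Real.log_nonpos (by linarith) (by linarith))

lemma neg_log_one_sub_hyperbolicKernel_le (hx : x ∈ Metric.ball 0 1) (hy : y ∈ Metric.ball 0 1)
    (hxy : x ≠ y) : -Real.log (1 - hyperbolicKernel x y) ≤ 4 * ‖x - y‖⁻¹ := by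
  have hbracket := ahlforsBracketSq_pos hx hy
  have hnorm := norm_sub_pos_iff.2 hxy
  have hle : ahlforsBracketSq x y ≤ 2 ^ 2 := by
    rw [mem_ball_zero_iff] at hx hy
    refine (ahlforsBracketSq_le x y).trans ?_
    gcongr
    nlinarith [norm_nonneg x, norm_nonneg y]
  calc -Real.log (1 - hyperbolicKernel x y)
      = Real.log (ahlforsBracketSq x y / ‖x - y‖ ^ 2) := by
        rw [one_sub_hyperbolicKernel hx hy, ← Real.log_inv, inv_div]
    _ ≤ Real.log ((2 * ‖x - y‖⁻¹) ^ 2) := by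
        rw [mul_pow, inv_pow, ← div_eq_mul_inv]
        gcongr
    _ = 2 * Real.log (2 * ‖x - y‖⁻¹) := by rw [Real.log_pow, Nat.cast_ofNat]
    _ ≤ 2 * (2 * ‖x - y‖⁻¹) := by
        gcongr
        exact Real.log_le_self (by positivity)
    _ = 4 * ‖x - y‖⁻¹ := by ring

lemma measurable_hyperbolicKernel [MeasurableSpace E] [BorelSpace E]
    [SecondCountableTopology E] : Measurable fun p : E × E => hyperbolicKernel p.1 p.2 := by
  unfold hyperbolicKernel ahlforsBracketSq
  fun_prop

lemma norm_mul_norm_sub_inversion_sq [InnerProductSpace ℝ E] (x : E) (hy : y ≠ 0) :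
    (‖y‖ * ‖x - (‖y‖ ^ 2)⁻¹ • y‖) ^ 2 = ahlforsBracketSq x y := by
  have hy' : ‖y‖ ≠ 0 := norm_ne_zero_iff.2 hy
  rw [mul_pow, norm_sub_sq_real, real_inner_smul_right, norm_smul, norm_inv, norm_pow, norm_norm,
    ahlforsBracketSq, norm_sub_sq_real]
  field_simp
  ring

end HyperbolicKernel

section DiskFeature

/-- The features `(1 - |z|²) zᵃ z̄ᵇ`, indexed by `(a, b)`, of the hyperbolic kernel of the unit
disk. -/
def diskFeature (i : ℕ × ℕ) (z : ℂ) : ℂ :=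
  (1 - ‖z‖ ^ 2 : ℝ) * (z ^ i.1 * conj z ^ i.2)

lemma continuous_diskFeature (i : ℕ × ℕ) : Continuous (diskFeature i) := by
  unfold diskFeature
  fun_prop

lemma ofReal_ahlforsBracketSq (z w : ℂ) :
    (ahlforsBracketSq z w : ℂ) = (1 - z * conj w) * (1 - conj z * w) := by
  rw [ahlforsBracketSq]
  push_cast
  simp only [← Complex.mul_conj', map_sub]
  ring

lemma hasSum_diskFeature {z w : ℂ} (hz : z ∈ Metric.ball 0 1) (hw : w ∈ Metric.ball 0 1) :
    HasSum (fun i => diskFeature i z * conj (diskFeature i w)) (hyperbolicKernel z w : ℂ) := by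
  rw [mem_ball_zero_iff] at hz hw
  have hzw : ‖z‖ * ‖w‖ < 1 := by nlinarith [norm_nonneg z, norm_nonneg w]
  have ha : ‖z * conj w‖ < 1 := by rwa [norm_mul, RCLike.norm_conj]
  have hb : ‖conj z * w‖ < 1 := by rwa [norm_mul, RCLike.norm_conj]
  have hgeom := (hasSum_geometric_of_norm_lt_one ha).mul (hasSum_geometric_of_norm_lt_one hb)
    (summable_mul_of_summable_norm (summable_norm_geometric_of_norm_lt_one ha)
      (summable_norm_geometric_of_norm_lt_one hb))
  have hsum := hgeom.mul_left (((1 - ‖z‖ ^ 2) * (1 - ‖w‖ ^ 2) : ℝ) : ℂ)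
  rw [← mul_inv, ← ofReal_ahlforsBracketSq, ← div_eq_mul_inv, ← Complex.ofReal_div] at hsum
  refine hsum.congr_fun fun i => ?_
  simp only [diskFeature, map_mul, map_pow, Complex.conj_conj, Complex.conj_ofReal,
    Complex.ofReal_mul]
  ring

theorem isFeatureExpansionOn_diskFeature :
    IsFeatureExpansionOn diskFeature (hyperbolicKernel (E := ℂ)) (Metric.ball 0 1) where
  measurable i := (continuous_diskFeature i).measurable
  hasSum _ hz _ hw := hasSum_diskFeature hz hw

/-- The identification `x ↦ x 0 + x 1 * I` of the plane with `ℂ`, through which the features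
`diskFeature` are evaluated on `E2`. -/
def toComplex : E2 ≃ₗᵢ[ℝ] ℂ :=
  Complex.orthonormalBasisOneI.repr.symm

theorem isFeatureExpansionOn_diskFeature_toComplex :
    IsFeatureExpansionOn (fun i x => diskFeature i (toComplex x)) hyperbolicKernel diskD := by
  have hmaps : MapsTo toComplex diskD (Metric.ball 0 1) := fun x hx => by
    simpa [diskD] using hx
  have hcomp := isFeatureExpansionOn_diskFeature.comp toComplex.continuous.measurable hmaps
  have hkernel : (fun x y : E2 => hyperbolicKernel (toComplex x) (toComplex y)) =
      hyperbolicKernel := by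
    funext x y
    simp only [hyperbolicKernel, ahlforsBracketSq, ← map_sub, LinearIsometryEquiv.norm_map]
  rwa [hkernel] at hcomp

lemma ofReal_inner_eq_toComplex (x t : E2) :
    ((⟪x, t⟫ : ℝ) : ℂ) =
      conj (toComplex t) / 2 * toComplex x + toComplex t / 2 * conj (toComplex x) := by
  rw [← toComplex.inner_map_map, Complex.inner, Complex.re_eq_add_conj, map_mul, Complex.conj_conj]
  ring

theorem ae_eq_zero_of_forall_integral_mul_toComplex_pow_eq_zero {μ : Measure E2} {R : ℝ}
    (hR : ∀ᵐ x ∂μ, ‖x‖ ≤ R) {f : E2 → ℝ} (hf : Integrable f μ)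
    (h : ∀ m n : ℕ, ∫ x, (f x : ℂ) * (toComplex x ^ m * conj (toComplex x) ^ n) ∂μ = 0) :
    f =ᵐ[μ] 0 := by
  refine ae_eq_zero_of_forall_integral_mul_inner_pow_eq_zero hR hf fun t n => ?_
  have hint (m n : ℕ) :
      Integrable (fun x => (f x : ℂ) * (toComplex x ^ m * conj (toComplex x) ^ n)) μ := by
    refine hf.ofReal.mul_bdd (c := R ^ m * R ^ n) ?_ ?_
    · exact Continuous.aestronglyMeasurable (by fun_prop)
    · filter_upwards [hR] with x hx
      rw [norm_mul, norm_pow, norm_pow, RCLike.norm_conj, LinearIsometryEquiv.norm_map]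
      have := (norm_nonneg x).trans hx
      gcongr
  have hexpand : ∀ x : E2, ((f x * ⟪x, t⟫ ^ n : ℝ) : ℂ) = ∑ m ∈ Finset.range (n + 1),
      (conj (toComplex t) / 2) ^ m * (toComplex t / 2) ^ (n - m) * n.choose m *
        ((f x : ℂ) * (toComplex x ^ m * conj (toComplex x) ^ (n - m))) := fun x => by
    rw [Complex.ofReal_mul, Complex.ofReal_pow, ofReal_inner_eq_toComplex, add_pow, Finset.mul_sum]
    refine Finset.sum_congr rfl fun m _ => ?_
    ring
  rw [← Complex.ofReal_eq_zero, ← integral_complex_ofReal]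
  simp only [hexpand]
  rw [integral_finsetSum _ fun m _ => (hint m (n - m)).const_mul _]
  simp only [integral_const_mul, h, mul_zero, Finset.sum_const_zero]

end DiskFeature

section DiskMeasure

instance : IsFiniteMeasure muD :=
  ⟨by rw [muD, Measure.restrict_apply_univ]; exact measure_ball_lt_top⟩

instance : NullSingletonClass muD := by
  unfold muD
  infer_instance

lemma ae_mem_diskD : ∀ᵐ x ∂muD, x ∈ diskD :=
  ae_restrict_mem measurableSet_ball

lemma ae_fst_mem_diskD : ∀ᵐ p ∂(muD.prod muD), p.1 ∈ diskD :=
  Measure.quasiMeasurePreserving_fst.ae ae_mem_diskD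

lemma ae_snd_mem_diskD : ∀ᵐ p ∂(muD.prod muD), p.2 ∈ diskD :=
  Measure.quasiMeasurePreserving_snd.ae ae_mem_diskD

lemma ae_snd_ne_zero : ∀ᵐ p ∂(muD.prod muD), p.2 ≠ 0 :=
  Measure.quasiMeasurePreserving_snd.ae (Measure.ae_ne muD 0)

lemma memLp_two_of_mem_Kset {lam : ℝ} {w : E2 → ℝ} (hw : w ∈ Kset lam) : MemLp w 2 muD := by
  refine MemLp.of_bound hw.1.aestronglyMeasurable lam ?_
  filter_upwards [hw.2.1] with x ⟨hx0, hx⟩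
  rwa [Real.norm_of_nonneg hx0]

lemma integrable_inv_norm_sub_mul {f : E2 → ℝ} (hf : Integrable f muD) :
    Integrable (fun p : E2 × E2 => ‖p.1 - p.2‖⁻¹ * f p.2) (muD.prod muD) := by
  have hinv : IntegrableOn (fun z : E2 => ‖z‖⁻¹) (Metric.ball 0 2) volume :=
    integrableOn_ball_of_norm_le_rpow (C := 1) (α := 1) (by simp) (by simp)
      (ae_of_all _ fun z => by simp [Real.rpow_neg_one])
      measurable_norm.inv.aestronglyMeasurable
  refine integrable_comp_sub_mul measurableSet_ball hinv hf ?_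
  filter_upwards [ae_fst_mem_diskD, ae_snd_mem_diskD] with p hp₁ hp₂
  rw [diskD, mem_ball_zero_iff] at hp₁ hp₂
  rw [mem_ball_zero_iff]
  linarith [norm_sub_le p.1 p.2]

lemma integrable_norm_sq_mul {f : E2 → ℝ} (hf : Integrable f muD) :
    Integrable (fun x => ‖x‖ ^ 2 * f x) muD := by
  refine hf.bdd_mul (c := 1) (by fun_prop) ?_
  filter_upwards [ae_mem_diskD] with x hx
  rw [norm_pow, norm_norm]
  exact pow_le_one₀ (norm_nonneg x) (mem_ball_zero_iff.1 hx).le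

end DiskMeasure

section GreenFunction

-- At `y = 0`, the conventions `log 0 = 0` and `0⁻¹ = 0` make `greenG x 0` equal to `0` instead of
-- its limit `-(2π)⁻¹ log ‖x‖`.
lemma greenG_eq_neg_log {x y : E2} (hx : x ∈ diskD) (hy : y ∈ diskD) (hy₀ : y ≠ 0)
    (hxy : x ≠ y) :
    greenG x y = (4 * π)⁻¹ * -Real.log (1 - hyperbolicKernel x y) := by
  have hbracket := norm_mul_norm_sub_inversion_sq x hy₀
  have hpos := ahlforsBracketSq_pos hx hy
  have hdist : ‖x - y‖ ≠ 0 := (norm_sub_pos_iff.2 hxy).ne'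
  have hprod : ‖y‖ * ‖x - (‖y‖ ^ 2)⁻¹ • y‖ ≠ 0 := fun h0 => by
    rw [h0, zero_pow two_ne_zero] at hbracket
    exact hpos.ne hbracket
  rw [one_sub_hyperbolicKernel hx hy, Real.log_div (pow_ne_zero 2 hdist) hpos.ne', ← hbracket,
    Real.log_pow, Real.log_pow, Real.log_mul (left_ne_zero_of_mul hprod)
    (right_ne_zero_of_mul hprod), greenG, greenh]
  field

lemma greenG_ae_eq_neg_log : (fun p : E2 × E2 => greenG p.1 p.2) =ᵐ[muD.prod muD]
    fun p => (4 * π)⁻¹ * -Real.log (1 - hyperbolicKernel p.1 p.2) := by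
  filter_upwards [ae_fst_mem_diskD, ae_snd_mem_diskD, ae_snd_ne_zero,
    ae_prod_fst_ne_snd muD muD] with p hp₁ hp₂ hp₀ hne using greenG_eq_neg_log hp₁ hp₂ hp₀ hne

lemma integrable_neg_log_mul {f g : E2 → ℝ} (hf : MemLp f 2 muD) (hg : MemLp g 2 muD) :
    Integrable (fun p : E2 × E2 => -Real.log (1 - hyperbolicKernel p.1 p.2) * (f p.1 * g p.2))
      (muD.prod muD) := by
  have hf₂ : Integrable (fun p : E2 × E2 => ‖p.1 - p.2‖⁻¹ * f p.1 ^ 2) (muD.prod muD) := by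
    refine (integrable_inv_norm_sub_mul hf.integrable_sq).swap.congr (ae_of_all _ fun p => ?_)
    simp only [Function.comp_apply, Prod.fst_swap, Prod.snd_swap, norm_sub_rev p.2]
  have hg₂ := integrable_inv_norm_sub_mul hg.integrable_sq
  refine ((hf₂.add hg₂).const_mul 4).mono' ?_ ?_
  · have hlog : Measurable fun p : E2 × E2 => -Real.log (1 - hyperbolicKernel p.1 p.2) :=
      (Real.measurable_log.comp (measurable_hyperbolicKernel.const_sub 1)).neg
    exact hlog.aestronglyMeasurable.mul
      (hf.aestronglyMeasurable.comp_fst.mul hg.aestronglyMeasurable.comp_snd)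
  · filter_upwards [ae_fst_mem_diskD, ae_snd_mem_diskD, ae_prod_fst_ne_snd muD muD]
      with p hp₁ hp₂ hne
    calc ‖-Real.log (1 - hyperbolicKernel p.1 p.2) * (f p.1 * g p.2)‖
        = -Real.log (1 - hyperbolicKernel p.1 p.2) * |f p.1 * g p.2| := by
          rw [norm_mul, Real.norm_of_nonneg
            (neg_log_one_sub_hyperbolicKernel_nonneg hp₁ hp₂ hne), Real.norm_eq_abs]
      _ ≤ 4 * ‖p.1 - p.2‖⁻¹ * (f p.1 ^ 2 + g p.2 ^ 2) := by
          gcongr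
          · exact neg_log_one_sub_hyperbolicKernel_le hp₁ hp₂ hne
          · exact abs_mul_le_sq_add_sq _ _
      _ = 4 * (‖p.1 - p.2‖⁻¹ * f p.1 ^ 2 + ‖p.1 - p.2‖⁻¹ * g p.2 ^ 2) := by ring

lemma integrable_greenG_mul {f g : E2 → ℝ} (hf : MemLp f 2 muD) (hg : MemLp g 2 muD) :
    Integrable (fun p : E2 × E2 => greenG p.1 p.2 * (f p.1 * g p.2)) (muD.prod muD) := by
  refine ((integrable_neg_log_mul hf hg).const_mul (4 * π)⁻¹).congr ?_
  filter_upwards [greenG_ae_eq_neg_log] with p hp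
  rw [hp, mul_assoc]

end GreenFunction

section Energy

variable {f g : E2 → ℝ}

/-- The bilinear form `∫∫ G(x, y) f(x) g(y)` of which `Efun` is half the diagonal. -/
def greenForm (f g : E2 → ℝ) : ℝ :=
  ∫ p, greenG p.1 p.2 * (f p.1 * g p.2) ∂(muD.prod muD)

lemma greenForm_eq_integral_neg_log (f g : E2 → ℝ) :
    greenForm f g = (4 * π)⁻¹ *
      ∫ p, -Real.log (1 - hyperbolicKernel p.1 p.2) * (f p.1 * g p.2) ∂(muD.prod muD) := by
  rw [greenForm, ← integral_const_mul]
  refine integral_congr_ae ?_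
  filter_upwards [greenG_ae_eq_neg_log] with p hp
  rw [hp, mul_assoc]

lemma greenForm_comm (f g : E2 → ℝ) : greenForm f g = greenForm g f := by
  rw [greenForm_eq_integral_neg_log, greenForm_eq_integral_neg_log, ← integral_prod_swap]
  simp only [Prod.fst_swap, Prod.snd_swap, hyperbolicKernel_comm, mul_comm]

lemma greenForm_sub_left {f₁ f₂ : E2 → ℝ} (hf₁ : MemLp f₁ 2 muD) (hf₂ : MemLp f₂ 2 muD)
    (hg : MemLp g 2 muD) : greenForm (f₁ - f₂) g = greenForm f₁ g - greenForm f₂ g := by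
  rw [greenForm, greenForm, greenForm,
    ← integral_sub (integrable_greenG_mul hf₁ hg) (integrable_greenG_mul hf₂ hg)]
  simp only [Pi.sub_apply, sub_mul, mul_sub]

lemma greenForm_sub_sub (hf : MemLp f 2 muD) (hg : MemLp g 2 muD) :
    greenForm (f - g) (f - g) = greenForm f f - 2 * greenForm f g + greenForm g g := by
  rw [greenForm_sub_left hf hg (hf.sub hg), greenForm_comm f, greenForm_comm g,
    greenForm_sub_left hf hg hf, greenForm_sub_left hf hg hg, greenForm_comm g f]
  ring

lemma greenForm_eq_integral_integral (hf : MemLp f 2 muD) (hg : MemLp g 2 muD) :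
    greenForm f g = ∫ x, ∫ y, greenG x y * (f x * g y) ∂muD ∂muD :=
  integral_prod _ (integrable_greenG_mul hf hg)

lemma Efun_eq_greenForm (hf : MemLp f 2 muD) : Efun f = greenForm f f / 2 := by
  rw [greenForm_eq_integral_integral hf hf, Efun, ← muD]
  simp only [mul_assoc]
  ring

lemma calQ_eq_greenForm (Ω : ℝ) (hf : MemLp f 2 muD) (hg : MemLp g 2 muD) :
    calQ Ω g f = greenForm f g + Ω / 2 * ∫ x, ‖x‖ ^ 2 * f x ∂muD := by
  rw [greenForm_eq_integral_integral hf hg, ← integral_const_mul,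
    ← integral_add (integrable_greenG_mul hf hg).integral_prod_left
      ((integrable_norm_sq_mul (hf.integrable one_le_two)).const_mul _), calQ, ← muD]
  congr 1 with x
  rw [add_mul, ← integral_mul_const, mul_assoc]
  congr 2 with y
  ring

theorem calQ_sub_calQ_self (Ω : ℝ) (hf : MemLp f 2 muD) (hg : MemLp g 2 muD) :
    calQ Ω g f - calQ Ω g g = calE Ω f - calE Ω g - Efun (f - g) := by
  rw [calQ_eq_greenForm Ω hf hg, calQ_eq_greenForm Ω hg hg, calE, calE, ← muD,
    Efun_eq_greenForm hf, Efun_eq_greenForm hg, Efun_eq_greenForm (hf.sub hg),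
    greenForm_sub_sub hf hg]
  ring

theorem sq_norm_integral_mul_diskFeature_le (hf : MemLp f 2 muD) (i : ℕ × ℕ) :
    ‖∫ x, (f x : ℂ) * diskFeature i (toComplex x) ∂muD‖ ^ 2 ≤ 8 * π * Efun f := by
  have hk01 : ∀ᵐ p ∂(muD.prod muD), hyperbolicKernel p.1 p.2 ∈ Ico 0 1 := by
    filter_upwards [ae_fst_mem_diskD, ae_snd_mem_diskD, ae_prod_fst_ne_snd muD muD]
      with p hp₁ hp₂ hne using hyperbolicKernel_mem_Ico hp₁ hp₂ hne
  have hle := isFeatureExpansionOn_diskFeature_toComplex.sq_norm_integral_le_integral_neg_log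
    ae_mem_diskD (fun x hx => hyperbolicKernel_self hx) measurable_hyperbolicKernel.aemeasurable
    hk01 (hf.integrable one_le_two) (integrable_neg_log_mul hf hf) i
  refine hle.trans_eq ?_
  rw [Efun_eq_greenForm hf, greenForm_eq_integral_neg_log]
  field

lemma Efun_nonneg (hf : MemLp f 2 muD) : 0 ≤ Efun f :=
  nonneg_of_mul_nonneg_right ((sq_nonneg _).trans (sq_norm_integral_mul_diskFeature_le hf 0))
    (by positivity)

theorem ae_eq_zero_of_Efun_nonpos (hf : MemLp f 2 muD) (h : Efun f ≤ 0) : f =ᵐ[muD] 0 := by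
  have hcoeff : ∀ i, ∫ x, (f x : ℂ) * diskFeature i (toComplex x) ∂muD = 0 := fun i => by
    have hi := sq_norm_integral_mul_diskFeature_le hf i
    rw [le_antisymm h (Efun_nonneg hf), mul_zero] at hi
    exact norm_eq_zero.1 (pow_eq_zero_iff two_ne_zero |>.1 (hi.antisymm (sq_nonneg _)))
  have hnorm : ∀ᵐ x ∂muD, ‖x‖ ≤ 1 := by
    filter_upwards [ae_mem_diskD] with x hx using (mem_ball_zero_iff.1 hx).le
  have hint : Integrable (fun x => (1 - ‖x‖ ^ 2) * f x) muD := by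
    have hf₁ := hf.integrable one_le_two
    simp only [sub_mul, one_mul]
    exact hf₁.sub (integrable_norm_sq_mul hf₁)
  have hzero : (fun x => (1 - ‖x‖ ^ 2) * f x) =ᵐ[muD] 0 := by
    refine ae_eq_zero_of_forall_integral_mul_toComplex_pow_eq_zero hnorm hint fun m n => ?_
    rw [← hcoeff (m, n)]
    congr 1 with x
    rw [diskFeature, LinearIsometryEquiv.norm_map, Complex.ofReal_mul]
    ring
  filter_upwards [hzero, ae_mem_diskD] with x hx hxD
  exact (mul_eq_zero.1 hx).resolve_left (one_sub_norm_sq_pos hxD).ne'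

end Energy

theorem stmt7_general (Ω : ℝ) {v w : E2 → ℝ} (hv : MemLp v 2 muD) (hw : MemLp w 2 muD)
    (h : calE Ω v ≤ calE Ω w) :
    calQ Ω w v ≤ calQ Ω w w ∧ (calQ Ω w v = calQ Ω w w → v =ᵐ[muD] w) := by
  have hsub := calQ_sub_calQ_self Ω hv hw
  refine ⟨by linarith [Efun_nonneg (hv.sub hw)], fun heq => ?_⟩
  have hzero := ae_eq_zero_of_Efun_nonpos (hv.sub hw) (by linarith)
  filter_upwards [hzero] with x hx using sub_eq_zero.1 hx

theorem stmt7 (Ω lam : ℝ) (hΩ : 0 < Ω) (hlam : 1/π < lam)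
    (wlam : E2 → ℝ) (hmem : wlam ∈ Kset lam)
    (hmax : ∀ v ∈ Kset lam, calE Ω v ≤ calE Ω wlam) :
    ∀ v ∈ Kset lam, calQ Ω wlam v ≤ calQ Ω wlam wlam ∧
      (calQ Ω wlam v = calQ Ω wlam wlam → v =ᵐ[muD] wlam) := fun v hv =>
  stmt7_general Ω (memLp_two_of_mem_Kset hv) (memLp_two_of_mem_Kset hmem) (hmax v hv)
end
end
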